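/- With Γ as above and M = Γ(∧^{2r} g) ⊂ S^r(g): an element x ∈ g is singular if and only if f(x) = 0 for all f ∈ M. In particular M is contained in the ideal of polynomials vanishing on Sing g. -/

import Mathlib

open Module

/-- The value at `x` of `Γ(w₁ ∧ ⋯ ∧ w_{2r})`, the sum over perfect matchings `ν` of
`{1, …, 2r}` of `∏ᵢ B([w_{ν(2i-1)}, w_{ν(2i)}], x)` (`B` the Killing form), written as
the average over all of `Σ_{2r}` with signs (each matching class has `r! 2^r`
permutations, on which the signed summand is constant). -/
noncomputable def GammaVal {L : Type*} [LieRing L] [LieAlgebra ℂ L]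
    [Module.Finite ℂ L] (r : ℕ) (w : Fin (2 * r) → L) (x : L) : ℂ :=
  (1 / ((Nat.factorial r : ℂ) * 2 ^ r)) *
    ∑ σ : Equiv.Perm (Fin (2 * r)), ((Equiv.Perm.sign σ : ℤ) : ℂ) *
      ∏ i : Fin r,
        killingForm ℂ L
          ⁅w (σ ⟨2 * i.1, by have := i.isLt; omega⟩),
            w (σ ⟨2 * i.1 + 1, by have := i.isLt; omega⟩)⁆ x

section Matching

variable {K V ι : Type*} [Field K] [AddCommGroup V] [Module K V]

theorem prod_update_eq [Fintype ι] [DecidableEq ι] (B : V →ₗ[K] V →ₗ[K] K)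
    (w : ι × Fin 2 → V) (i : ι) (a : Fin 2) (z : V) :
    ∏ j, B (Function.update w (i, a) z (j, 0)) (Function.update w (i, a) z (j, 1)) =
      B (Function.update w (i, a) z (i, 0)) (Function.update w (i, a) z (i, 1)) *
        ∏ j ∈ {i}ᶜ, B (w (j, 0)) (w (j, 1)) := by
  rw [Fintype.prod_eq_mul_prod_compl i]
  congr 1
  refine Finset.prod_congr rfl fun j hj => ?_
  have hj' : j ≠ i := by simpa using hj
  simp [hj']

/-- The multilinear map `w ↦ ∏ i, B (w (i, 0)) (w (i, 1))`. -/
def matchingProd [Fintype ι] (B : V →ₗ[K] V →ₗ[K] K) :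
    MultilinearMap K (fun _ : ι × Fin 2 => V) K where
  toFun w := ∏ i, B (w (i, 0)) (w (i, 1))
  map_update_add' := by
    classical
    rintro inst w ⟨i, a⟩ x y
    rw [Subsingleton.elim inst instDecidableEqProd]
    simp only [prod_update_eq]
    fin_cases a <;> simp [add_mul]
  map_update_smul' := by
    classical
    rintro inst w ⟨i, a⟩ c x
    rw [Subsingleton.elim inst instDecidableEqProd]
    simp only [prod_update_eq]
    fin_cases a <;> simp [mul_assoc]

theorem matchingProd_apply [Fintype ι] (B : V →ₗ[K] V →ₗ[K] K) (w : ι × Fin 2 → V) :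
    matchingProd B w = ∏ i, B (w (i, 0)) (w (i, 1)) := rfl

theorem AlternatingMap.eq_zero_of_forall_update_eq_zero {κ : Type*} [Fintype κ] [DecidableEq κ]
    (f : V [⋀^κ]→ₗ[K] K) (w : κ → V) (c : κ → K) (j : κ) (hj : c j ≠ 0)
    (h : f (Function.update w j (∑ k, c k • w k)) = 0) : f w = 0 := by
  rw [f.map_update_sum, Finset.sum_eq_single j] at h
  · simpa [hj] using h
  · intro k _ hk
    rw [f.map_update_smul, f.map_update_self w hk.symm, smul_zero]
  · simp

theorem alternatization_matchingProd_eq_zero [Fintype ι] [DecidableEq ι]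
    (B : V →ₗ[K] V →ₗ[K] K) (hB : B.IsAlt) [FiniteDimensional K V]
    (hr : finrank K (LinearMap.range B) < 2 * Fintype.card ι) (w : ι × Fin 2 → V) :
    (matchingProd B).alternatization w = 0 := by
  have hdep : ¬ LinearIndependent K (fun k => B (w k)) := by
    intro hli
    have hle : Submodule.span K (Set.range fun k => B (w k)) ≤ LinearMap.range B :=
      Submodule.span_le.mpr (Set.range_subset_iff.mpr fun k => ⟨w k, rfl⟩)
    have := Submodule.finrank_mono hle
    rw [finrank_span_eq_card hli, Fintype.card_prod, Fintype.card_fin] at this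
    omega
  obtain ⟨c, hc, j, hj⟩ := Fintype.not_linearIndependent_iff.mp hdep
  refine AlternatingMap.eq_zero_of_forall_update_eq_zero _ w c j hj ?_
  have hv : B (∑ k, c k • w k) = 0 := by
    simpa using hc
  generalize ∑ k, c k • w k = v at hv
  have hv' (x : V) : B x v = 0 := by
    rw [← hB.neg, hv]
    simp
  rw [MultilinearMap.alternatization_apply]
  refine Finset.sum_eq_zero fun σ _ => ?_
  rw [MultilinearMap.domDomCongr_apply, matchingProd_apply,
    Finset.prod_eq_zero (Finset.mem_univ (σ.symm j).1), smul_zero]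
  obtain ⟨⟨i, a⟩, rfl⟩ := σ.surjective j
  fin_cases a <;> simp [hv, hv']

theorem LinearMap.IsAlt.exists_symplectic_family [FiniteDimensional K V] (r : ℕ) :
    ∀ (B : V →ₗ[K] V →ₗ[K] K), B.IsAlt → 2 * r ≤ finrank K (LinearMap.range B) →
      ∃ u v : Fin r → V, ∀ i j, B (u i) (u j) = 0 ∧ B (v i) (v j) = 0 ∧
        B (u i) (v j) = if i = j then 1 else 0 := by
  induction r with
  | zero => exact fun _ _ _ => ⟨Fin.elim0, Fin.elim0, fun i => i.elim0⟩
  | succ r ih =>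
    intro B hB hr
    obtain ⟨p, q, hpq⟩ : ∃ p q, B p q = 1 := by
      have hB0 : B ≠ 0 := by
        rintro rfl
        rw [LinearMap.range_zero, finrank_bot] at hr
        omega
      obtain ⟨p, hp⟩ := DFunLike.ne_iff.mp hB0
      obtain ⟨q, hq⟩ := DFunLike.ne_iff.mp hp
      refine ⟨p, (B p q)⁻¹ • q, ?_⟩
      simpa using inv_mul_cancel₀ hq
    have hqp : B q p = -1 := by rw [← hB.neg, hpq]
    let P : V →ₗ[K] V := LinearMap.id - (B.flip q).smulRight p + (B.flip p).smulRight q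
    have hP (x : V) : P x = x - B x q • p + B x p • q := rfl
    have hPp (x : V) : B p (P x) = 0 := by
      have := hB.neg x p
      simp [hP, hpq, hB.self_eq_zero p, ← this]
    have hPq (x : V) : B q (P x) = 0 := by
      have := hB.neg x q
      simp [hP, hqp, hB.self_eq_zero q, ← this]
    have hpP (x : V) : B (P x) p = 0 := by rw [← hB.neg, hPp, neg_zero]
    have hqP (x : V) : B (P x) q = 0 := by rw [← hB.neg, hPq, neg_zero]
    let C : V →ₗ[K] V →ₗ[K] K := B.compl₁₂ P P
    have hC (x y : V) : C x y = B (P x) (P y) := rfl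
    have hCalt : C.IsAlt := fun x => hB.self_eq_zero (P x)
    have hle : LinearMap.range B ≤ LinearMap.range C ⊔ Submodule.span K {B p, B q} := by
      rintro _ ⟨x, rfl⟩
      have hx : B x = C x + (B x q • B p - B x p • B q) := by
        ext y
        have e : B (P x) y = B (P x) (P y) := by
          conv_rhs => rw [hP y]
          simp [hpP, hqP]
        rw [LinearMap.add_apply, hC, ← e, hP]
        simp
      rw [hx]
      refine Submodule.add_mem_sup ⟨x, rfl⟩ (Submodule.sub_mem _ ?_ ?_) <;>
        exact Submodule.smul_mem _ _ (Submodule.subset_span (by simp))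
    have hspan : finrank K (Submodule.span K {B p, B q}) ≤ 2 := by
      classical
      have := finrank_span_finset_le_card (R := K) ({B p, B q} : Finset (V →ₗ[K] K))
      rw [Finset.coe_pair] at this
      exact this.trans Finset.card_le_two
    have hCr : 2 * r ≤ finrank K (LinearMap.range C) := by
      have h1 := Submodule.finrank_mono hle
      have h2 := Submodule.finrank_add_le_finrank_add_finrank (LinearMap.range C)
        (Submodule.span K {B p, B q})
      omega
    obtain ⟨u, v, huv⟩ := ih C hCalt hCr
    refine ⟨Fin.cons p (P ∘ u), Fin.cons q (P ∘ v), fun i j => ?_⟩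
    simp only [hC] at huv
    refine Fin.cases ?_ (fun i => ?_) i <;> refine Fin.cases ?_ (fun j => ?_) j
    · simp [hpq, hB.self_eq_zero]
    · simp [hPp, hPq, (Fin.succ_ne_zero j).symm]
    · simp [hpP, hqP, Fin.succ_ne_zero]
    · simpa using huv i j

theorem sign_mul_prod_eq_zero_or_one [Fintype ι] [DecidableEq ι] (B : V →ₗ[K] V →ₗ[K] K)
    (hB : B.IsAlt) (u v : ι → V) (huv : ∀ i j, B (u i) (u j) = 0 ∧ B (v i) (v j) = 0 ∧
        B (u i) (v j) = if i = j then 1 else 0) (σ : Equiv.Perm (ι × Fin 2)) :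
    let w : ι × Fin 2 → V := fun k => ![u k.1, v k.1] k.2
    Equiv.Perm.sign σ • ∏ i, B (w (σ (i, 0))) (w (σ (i, 1))) = 0 ∨
    Equiv.Perm.sign σ • ∏ i, B (w (σ (i, 0))) (w (σ (i, 1))) = 1 := by
  intro w
  have hvu (i j : ι) : B (v i) (u j) = if i = j then -1 else 0 := by
    rw [← hB.neg, (huv j i).2.2]
    by_cases h : i = j <;> simp [h, Ne.symm]
  have hw (i j : ι) (a b : Fin 2) (h : B (w (i, a)) (w (j, b)) ≠ 0) : i = j ∧ a ≠ b := by
    fin_cases a <;> fin_cases b <;> simp_all [w]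
  by_cases hσ : ∀ i, B (w (σ (i, 0))) (w (σ (i, 1))) ≠ 0
  · right
    have h1 (i : ι) (a : Fin 2) : (σ (i, a)).1 = (σ (i, 0)).1 := by
      fin_cases a
      · rfl
      · exact (hw _ _ _ _ (hσ i)).1.symm
    have h2 (i : ι) : (σ (i, 0)).2 ≠ (σ (i, 1)).2 := (hw _ _ _ _ (hσ i)).2
    let τ : Equiv.Perm ι := Equiv.ofBijective (fun i => (σ (i, 0)).1) <| by
      refine Finite.surjective_iff_bijective.mp fun i => ?_
      obtain ⟨⟨j, a⟩, hj⟩ := σ.surjective (i, 0)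
      exact ⟨j, by simp only [← h1 j a, hj]⟩
    let ρ (i : ι) : Equiv.Perm (Fin 2) := Equiv.ofBijective (fun a => (σ (i, a)).2) <| by
      refine Finite.injective_iff_bijective.mp fun a b hab => ?_
      have := h2 i
      fin_cases a <;> fin_cases b
      · rfl
      · exact (this hab).elim
      · exact (this hab.symm).elim
      · rfl
    have hdec : σ = (Equiv.prodCongrRight ρ).trans (Equiv.prodCongrLeft fun _ : Fin 2 => τ) := by
      ext ⟨i, a⟩
      · exact h1 i a
      · rfl
    have hsign : Equiv.Perm.sign σ = ∏ i, Equiv.Perm.sign (ρ i) := by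
      rw [hdec, Equiv.Perm.sign_trans, Equiv.Perm.sign_prodCongrRight,
        Equiv.Perm.sign_prodCongrLeft]
      simp
    have hfac (i : ι) : B (w (σ (i, 0))) (w (σ (i, 1))) = ((Equiv.Perm.sign (ρ i) : ℤ) : K) := by
      have hs : ∀ π : Equiv.Perm (Fin 2), ∀ k : ι, B (w (k, π 0)) (w (k, π 1)) =
          ((Equiv.Perm.sign π : ℤ) : K) := by
        intro π k
        obtain rfl | rfl : π = 1 ∨ π = Equiv.swap 0 1 := by
          revert π; decide
        · simp [w, huv]
        · simp [w, hvu]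
      rw [← hs (ρ i) (σ (i, 0)).1]
      congr 1
      exact congrArg w (Prod.ext (h1 i 1) rfl : σ (i, 1) = ((σ (i, 0)).1, ρ i 1))
    simp only [hfac, hsign]
    rw [Units.smul_def, zsmul_eq_mul]
    push_cast
    rw [← Finset.prod_mul_distrib]
    refine Finset.prod_eq_one fun i _ => ?_
    rw [← Int.cast_mul, ← Units.val_mul, Int.units_mul_self]
    simp
  · left
    push Not at hσ
    obtain ⟨i, hi⟩ := hσ
    rw [Finset.prod_eq_zero (Finset.mem_univ i) hi, smul_zero]

theorem alternatization_matchingProd_eq_zero_iff [CharZero K] [FiniteDimensional K V] (r : ℕ)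
    (B : V →ₗ[K] V →ₗ[K] K) (hB : B.IsAlt) :
    (∀ w : Fin r × Fin 2 → V, (matchingProd B).alternatization w = 0) ↔
      finrank K (LinearMap.range B) < 2 * r := by
  refine ⟨fun h => ?_, fun h => alternatization_matchingProd_eq_zero B hB (by simpa using h)⟩
  by_contra! hr
  obtain ⟨u, v, huv⟩ := hB.exists_symplectic_family r B hr
  have key := sign_mul_prod_eq_zero_or_one B hB u v huv
  specialize h fun k => ![u k.1, v k.1] k.2
  rw [MultilinearMap.alternatization_apply] at h
  simp only [MultilinearMap.domDomCongr_apply, matchingProd_apply] at h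
  set T : Equiv.Perm (Fin r × Fin 2) → K := fun σ => Equiv.Perm.sign σ •
    ∏ i, B (![u (σ (i, 0)).1, v (σ (i, 0)).1] (σ (i, 0)).2)
      (![u (σ (i, 1)).1, v (σ (i, 1)).1] (σ (i, 1)).2) with hT
  classical
  have hT' (σ) : T σ = if T σ = 1 then 1 else 0 := by
    rcases key σ with h0 | h0 <;> rw [show T σ = _ from h0] <;> simp
  change ∑ σ, T σ = 0 at h
  rw [Finset.sum_congr rfl fun σ _ => hT' σ, Finset.sum_boole, Nat.cast_eq_zero,
    Finset.card_eq_zero] at h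
  have h1 : (1 : Equiv.Perm (Fin r × Fin 2)) ∈ (Finset.univ.filter fun σ => T σ = 1) := by
    simp [hT, huv]
  rw [h] at h1
  simp at h1

end Matching

section Lie

variable {L : Type*} [LieRing L] [LieAlgebra ℂ L]

/-- The alternating form `(u, v) ↦ κ([u, v], x)`, with `κ` the Killing form. -/
noncomputable def lieKillingForm (x : L) : L →ₗ[ℂ] L →ₗ[ℂ] ℂ :=
  -(killingForm ℂ L).compl₂ (LieAlgebra.ad ℂ L x)

theorem lieKillingForm_apply (x u v : L) : lieKillingForm x u v = killingForm ℂ L ⁅u, v⁆ x := by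
  simp only [lieKillingForm, LinearMap.neg_apply, LinearMap.compl₂_apply, LieAlgebra.ad_apply]
  rw [LieModule.traceForm_apply_lie_apply, ← lie_skew, map_neg, neg_neg]

theorem lieKillingForm_isAlt (x : L) : (lieKillingForm x).IsAlt := fun u => by
  simp [lieKillingForm_apply]

theorem finrank_range_lieKillingForm [FiniteDimensional ℂ L] [LieAlgebra.IsKilling ℂ L] (x : L) :
    finrank ℂ (LinearMap.range (lieKillingForm x)) +
      finrank ℂ (LinearMap.ker (LieAlgebra.ad ℂ L x)) = finrank ℂ L := by
  have hker : LinearMap.ker (lieKillingForm x) = LinearMap.ker (LieAlgebra.ad ℂ L x) := by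
    ext u
    have h : lieKillingForm x u = killingForm ℂ L ⁅x, u⁆ := by
      ext v
      rw [lieKillingForm_apply, LieModule.traceForm_comm, ← LieModule.traceForm_apply_lie_apply]
    rw [LinearMap.mem_ker, LinearMap.mem_ker, h, LieAlgebra.ad_apply, ← LinearMap.mem_ker,
      LieAlgebra.IsKilling.ker_killingForm_eq_bot, Submodule.mem_bot]
  rw [← hker, LinearMap.finrank_range_add_finrank_ker]

theorem GammaVal_eq [FiniteDimensional ℂ L] (r : ℕ) (w : Fin (2 * r) → L) (x : L) :
    GammaVal r w x = (1 / ((Nat.factorial r : ℂ) * 2 ^ r)) *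
      (matchingProd (lieKillingForm x)).alternatization
        (w ∘ finProdFinEquiv.trans (finCongr (mul_comm r 2))) := by
  rw [GammaVal, MultilinearMap.alternatization_apply]
  congr 1
  let e : Fin r × Fin 2 ≃ Fin (2 * r) := finProdFinEquiv.trans (finCongr (mul_comm r 2))
  refine (Fintype.sum_equiv e.permCongr _ _ fun σ => ?_).symm
  rw [MultilinearMap.domDomCongr_apply, matchingProd_apply, Equiv.Perm.sign_permCongr,
    Units.smul_def, zsmul_eq_mul]
  congr 1
  refine Finset.prod_congr rfl fun i _ => ?_
  have h0 : e.symm ⟨2 * i.1, by have := i.isLt; omega⟩ = (i, 0) := by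
    rw [Equiv.symm_apply_eq]
    ext
    simp [e]
  have h1 : e.symm ⟨2 * i.1 + 1, by have := i.isLt; omega⟩ = (i, 1) := by
    rw [Equiv.symm_apply_eq]
    ext
    simp [e, add_comm]
  simp only [Equiv.permCongr_apply, h0, h1, lieKillingForm_apply]
  rfl

theorem forall_GammaVal_eq_zero_iff [FiniteDimensional ℂ L] (r : ℕ) (x : L) :
    (∀ w : Fin (2 * r) → L, GammaVal r w x = 0) ↔
      finrank ℂ (LinearMap.range (lieKillingForm x)) < 2 * r := by
  rw [← alternatization_matchingProd_eq_zero_iff r _ (lieKillingForm_isAlt x)]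
  have hc : (1 / ((Nat.factorial r : ℂ) * 2 ^ r)) ≠ 0 := by
    simp [Nat.factorial_ne_zero]
  simp only [GammaVal_eq, mul_eq_zero, hc, false_or]
  refine ⟨fun h w => ?_, fun h w => h _⟩
  have := h (w ∘ (finProdFinEquiv.trans (finCongr (mul_comm r 2))).symm)
  rwa [Function.comp_assoc, Equiv.symm_comp_self, Function.comp_id] at this

end Lie

/-- With `Γ` as above and `M = Γ(⋀^{2r} g) ⊆ S^r(g)` (spanned by the values of `Γ` on
decomposables): an element `x ∈ g` is singular (`dim g^x > rank g = dim H`) if and only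
if `f(x) = 0` for all `f ∈ M`, i.e. iff `Γ(w₁ ∧ ⋯ ∧ w_{2r})(x) = 0` for all
`w₁, …, w_{2r} ∈ g`. -/
theorem stmt17 (L : Type*) [LieRing L] [LieAlgebra ℂ L] [FiniteDimensional ℂ L]
    [LieAlgebra.IsSemisimple ℂ L]
    (H : LieSubalgebra ℂ L) [H.IsCartanSubalgebra]
    (n r : ℕ) (hn : finrank ℂ L = n) (hnr : n = finrank ℂ H + 2 * r) :
    ∀ x : L,
      finrank ℂ H < finrank ℂ (LinearMap.ker (LieAlgebra.ad ℂ L x)) ↔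
        ∀ w : Fin (2 * r) → L, GammaVal r w x = 0 := by
  intro x
  rw [forall_GammaVal_eq_zero_iff]
  have := finrank_range_lieKillingForm x
  omega
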